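/- Let D be a nonempty finite set, let s : D → ℝ and y : D → ℝ be functions, and let 𝒩_1 and 𝒩_2 be two complete non-overlapping partitionings of D into nonempty subsets such that 𝒩_2 is a sub-partitioning of 𝒩_1, i.e., for every block N ∈ 𝒩_1 there exists a subfamily of blocks of 𝒩_2 whose union is N. With e(N) = (1/|N|)·∑_{u∈N} s(u), o(N) = (1/|N|)·∑_{u∈N} y(u), and ENCE of a partitioning 𝒩 defined as ∑_{N∈𝒩} (|N|/|D|)·|o(N) − e(N)|, it holds that ENCE(𝒩_1) ≤ ENCE(𝒩_2). -/

import Mathlib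

/-- **Sub-partitioning has greater or equal ENCE.**
Let `D` be a nonempty finite set, `s y : α → ℝ`, and let `P₁, P₂` be two complete
non-overlapping partitionings of `D` into nonempty blocks such that `P₂` is a
sub-partitioning of `P₁` (every block of `P₁` is a union of a subfamily of blocks of
`P₂`). With `e(N) = (∑ u ∈ N, s u) / |N|`, `o(N) = (∑ u ∈ N, y u) / |N|`, and
`ENCE(P) = ∑ N ∈ P, (|N| / |D|) * |o(N) - e(N)|`, we have `ENCE(P₁) ≤ ENCE(P₂)`. -/
theorem ence_le_of_subpartition {α : Type*} [DecidableEq α]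
    (D : Finset α) (hD : D.Nonempty) (s y : α → ℝ)
    (P₁ P₂ : Finset (Finset α))
    (h₁ne : ∀ N ∈ P₁, N.Nonempty)
    (h₁disj : (P₁ : Set (Finset α)).PairwiseDisjoint id)
    (h₁union : P₁.biUnion id = D)
    (h₂ne : ∀ N ∈ P₂, N.Nonempty)
    (h₂disj : (P₂ : Set (Finset α)).PairwiseDisjoint id)
    (h₂union : P₂.biUnion id = D)
    (hsub : ∀ N ∈ P₁, ∃ S ⊆ P₂, S.biUnion id = N) :
    ∑ N ∈ P₁, (N.card : ℝ) / (D.card : ℝ) *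
        |(∑ u ∈ N, y u) / (N.card : ℝ) - (∑ u ∈ N, s u) / (N.card : ℝ)| ≤
      ∑ N ∈ P₂, (N.card : ℝ) / (D.card : ℝ) *
        |(∑ u ∈ N, y u) / (N.card : ℝ) - (∑ u ∈ N, s u) / (N.card : ℝ)| := by
  have key : ∀ N : Finset α, N.Nonempty → (N.card : ℝ) / (D.card : ℝ) *
        |(∑ u ∈ N, y u) / (N.card : ℝ) - (∑ u ∈ N, s u) / (N.card : ℝ)|
        = |∑ u ∈ N, (y u - s u)| / (D.card : ℝ) := by
    intro N hN
    have hc : (0 : ℝ) < N.card := by exact_mod_cast hN.card_pos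
    rw [← sub_div, abs_div, abs_of_pos hc, Finset.sum_sub_distrib]
    field_simp
  rw [Finset.sum_congr rfl fun N hN => key N (h₁ne N hN),
    Finset.sum_congr rfl fun N hN => key N (h₂ne N hN)]
  have hF : ∀ N ∈ P₁, (P₂.filter (· ⊆ N)).biUnion id = N := by
    intro N hN
    obtain ⟨S, hS, rfl⟩ := hsub N hN
    apply Finset.Subset.antisymm
    · exact Finset.biUnion_subset.2 fun M hM => (Finset.mem_filter.1 hM).2
    · exact Finset.biUnion_subset_biUnion_of_subset_left _ fun M hM =>
        Finset.mem_filter.2 ⟨hS hM, Finset.subset_biUnion_of_mem id hM⟩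
  have hle : ∀ N ∈ P₁, |∑ u ∈ N, (y u - s u)| / (D.card : ℝ) ≤
      ∑ M ∈ P₂.filter (· ⊆ N), |∑ u ∈ M, (y u - s u)| / (D.card : ℝ) := by
    intro N hN
    rw [← Finset.sum_div]
    gcongr
    have hsum : ∑ u ∈ N, (y u - s u) =
        ∑ M ∈ P₂.filter (· ⊆ N), ∑ u ∈ M, (y u - s u) := by
      conv_lhs => rw [← hF N hN]
      rw [Finset.sum_biUnion]
      · rfl
      · exact h₂disj.subset (by exact_mod_cast Finset.filter_subset _ _)
    rw [hsum]
    exact Finset.abs_sum_le_sum_abs _ _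
  refine (Finset.sum_le_sum hle).trans ?_
  rw [← Finset.sum_biUnion]
  · apply Finset.sum_le_sum_of_subset_of_nonneg
    · exact Finset.biUnion_subset.2 fun N _ => Finset.filter_subset _ _
    · intros
      positivity
  · intro N hN N' hN' hne
    refine Finset.disjoint_left.2 fun M hM hM' => ?_
    rw [Finset.mem_filter] at hM hM'
    obtain ⟨x, hx⟩ := h₂ne M hM.1
    exact Finset.disjoint_left.1 (h₁disj hN hN' hne) (hM.2 hx) (hM'.2 hx)
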